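/- Let d ≥ 1, let N ≥ 2, and let x_1, …, x_N be pairwise distinct points in ℝ^d. Let σ ∈ (0, ∞)^N and fix an index j. Define the responsibilities w_{ij} = K_{σ_j}(x_i, x_j) / ∑_{k ≠ i} K_{σ_k}(x_i, x_k) for i ≠ j, and the gradient g_j = ∑_{i ≠ j} ( ‖x_i − x_j‖² / σ_j³ − d / σ_j ) · w_{ij}. If g_j ≤ 0, then σ_j² ≥ (1/d) · min_{i ≠ j} ‖x_i − x_j‖². In particular, at any point of (0, ∞)^N where the first-order optimality condition g_j ≤ 0 holds, the bandwidth σ_j is bounded away from 0 by a positive constant depending only on d and the minimal distance from x_j to the other data points. -/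

import Mathlib

/-- The isotropic Gaussian kernel on `ℝ^d` with center `μ` and bandwidth `σ`:
`K_σ(x, μ) = (2πσ²)^{-d/2} · exp(−‖x − μ‖² / (2σ²))`. -/
noncomputable def gaussKernel (d : ℕ) (σ : ℝ) (x μ : EuclideanSpace ℝ (Fin d)) : ℝ :=
  (2 * Real.pi * σ ^ 2) ^ (-(d : ℝ) / 2) * Real.exp (-‖x - μ‖ ^ 2 / (2 * σ ^ 2))

/-!
The responsibilities are positive, and the coefficient of `w_{ij}` in `g_j` has the sign of
`‖x_i − x_j‖² − d σ_j²`. Hence `g_j ≤ 0` forces `‖x_i − x_j‖² ≤ d σ_j²` for some `i ≠ j`, and the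
left side is at least the minimal squared distance from `x_j`.
-/

theorem div_pow_three_sub_div_nonpos_iff {K : Type*} [Field K] [LinearOrder K]
    [IsStrictOrderedRing K] {a c s : K} (hs : 0 < s) :
    a / s ^ 3 - c / s ≤ 0 ↔ a ≤ c * s ^ 2 := by
  have hcs : c / s * s ^ 3 = c * s ^ 2 := by field_simp
  rw [sub_nonpos, div_le_iff₀ (pow_pos hs 3), hcs]

theorem gaussKernel_pos {d : ℕ} {σ : ℝ} (hσ : σ ≠ 0) (x μ : EuclideanSpace ℝ (Fin d)) :
    0 < gaussKernel d σ x μ := by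
  unfold gaussKernel
  positivity

section LeaveOneOut

open Finset

variable {d : ℕ} {ι : Type*} [Fintype ι] [DecidableEq ι]
  {x : ι → EuclideanSpace ℝ (Fin d)} {σ : ι → ℝ} {i j : ι}

/-- The responsibility `w_{ij}` of the kernel centered at `x j` for the data point `x i` in the
leave-one-out mixture at `x i`. It is meant for `i ≠ j`: the denominator omits the kernel
centered at `x i`. -/
noncomputable def looResponsibility (x : ι → EuclideanSpace ℝ (Fin d)) (σ : ι → ℝ) (i j : ι) : ℝ :=
  gaussKernel d (σ j) (x i) (x j) / ∑ k ∈ univ.erase i, gaussKernel d (σ k) (x i) (x k)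

/-- The component `g_j` of the gradient of the leave-one-out log-likelihood in the bandwidths,
given by its closed form in terms of the responsibilities. -/
noncomputable def looGradient (x : ι → EuclideanSpace ℝ (Fin d)) (σ : ι → ℝ) (j : ι) : ℝ :=
  ∑ i ∈ univ.erase j, (‖x i - x j‖ ^ 2 / σ j ^ 3 - d / σ j) * looResponsibility x σ i j

theorem looResponsibility_pos (hσ : ∀ k, σ k ≠ 0) (hij : i ≠ j) :
    0 < looResponsibility x σ i j :=
  div_pos (gaussKernel_pos (hσ j) _ _) <|
    sum_pos (fun k _ ↦ gaussKernel_pos (hσ k) _ _) ⟨j, mem_erase_of_ne_of_mem hij.symm (mem_univ j)⟩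

theorem exists_sq_norm_sub_le_of_looGradient_nonpos [Nontrivial ι] (hσ : ∀ k, 0 < σ k)
    (hg : looGradient x σ j ≤ 0) : ∃ i ≠ j, ‖x i - x j‖ ^ 2 ≤ d * σ j ^ 2 := by
  have others_nonempty : (univ.erase j).Nonempty := univ_nontrivial.erase_nonempty
  obtain ⟨i, hi, term_nonpos⟩ := exists_le_of_sum_le others_nonempty
    (hg.trans_eq sum_const_zero.symm)
  have hij : i ≠ j := ne_of_mem_erase hi
  have coeff_nonpos : ‖x i - x j‖ ^ 2 / σ j ^ 3 - d / σ j ≤ 0 :=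
    nonpos_of_mul_nonpos_left term_nonpos (looResponsibility_pos (fun k ↦ (hσ k).ne') hij)
  exact ⟨i, hij, (div_pow_three_sub_div_nonpos_iff (hσ j)).mp coeff_nonpos⟩

theorem akde_loo_bandwidth_lower_bound_of_grad_nonpos_general (hd : 1 ≤ d) (hσ : ∀ k, 0 < σ k)
    {m2 : ℝ} (hm2 : IsLeast {r : ℝ | ∃ i, i ≠ j ∧ r = ‖x i - x j‖ ^ 2} m2)
    (hg : looGradient x σ j ≤ 0) : (1 / (d : ℝ)) * m2 ≤ σ j ^ 2 := by
  obtain ⟨k, hkj, -⟩ := hm2.1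
  have : Nontrivial ι := ⟨k, j, hkj⟩
  obtain ⟨i, hij, hi⟩ := exists_sq_norm_sub_le_of_looGradient_nonpos hσ hg
  have hm2_le : m2 ≤ d * σ j ^ 2 := (hm2.2 ⟨i, hij, rfl⟩).trans hi
  have hd_pos : (0 : ℝ) < d := by exact_mod_cast hd
  rwa [one_div, inv_mul_le_iff₀ hd_pos]

end LeaveOneOut

/-- If the first-order optimality condition `g_j ≤ 0` holds for the LOO-MLL objective for
A-KDE, where `g_j = ∑_{i ≠ j} (‖x_i − x_j‖²/σ_j³ − d/σ_j) · w_{ij}` with responsibilities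
`w_{ij} = K_{σ_j}(x_i, x_j) / ∑_{k ≠ i} K_{σ_k}(x_i, x_k)`, then
`σ_j² ≥ (1/d) · min_{i ≠ j} ‖x_i − x_j‖²`. -/
theorem akde_loo_bandwidth_lower_bound_of_grad_nonpos
    (d N : ℕ) (hd : 1 ≤ d) (hN : 2 ≤ N)
    (x : Fin N → EuclideanSpace ℝ (Fin d)) (hx : Function.Injective x)
    (σ : Fin N → ℝ) (hσ : ∀ k, 0 < σ k) (j : Fin N)
    (m2 : ℝ) (hm2 : IsLeast {r : ℝ | ∃ i : Fin N, i ≠ j ∧ r = ‖x i - x j‖ ^ 2} m2)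
    (hg : ∑ i ∈ Finset.univ.erase j,
        (‖x i - x j‖ ^ 2 / (σ j) ^ 3 - (d : ℝ) / σ j) *
          (gaussKernel d (σ j) (x i) (x j) /
            ∑ k ∈ Finset.univ.erase i, gaussKernel d (σ k) (x i) (x k)) ≤ 0) :
    (1 / (d : ℝ)) * m2 ≤ (σ j) ^ 2 :=
  akde_loo_bandwidth_lower_bound_of_grad_nonpos_general hd hσ hm2 hg
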